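/- Let v be a radial weight satisfying ∫₀¹ (1-s)²/v̂(s) ds < ∞ and M₁(v) = sup_{0<r<1} (∫_r¹ v̂(s)/(1-s)² ds)^{1/2} (∫₀^r 1/v̂(s) ds)^{1/2} < ∞. Let (f_j)_{j≥1} be a sequence of functions analytic on 𝔻 with sup_j ‖f_j‖_{D_v} < ∞ and such that f_j → 0 uniformly on every compact subset of 𝔻 as j → ∞. Then lim_{j→∞} ∫₀¹ |f_j(t)| dt = 0. -/

import Mathlib

open MeasureTheory Real Set Filter

noncomputable section

/-- `hatw v r = ∫_r^1 v(s) ds`. -/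
def hatw (v : ℝ → ℝ) (r : ℝ) : ℝ := ∫ s in r..1, v s

/-- A radial weight: measurable, positive on `[0,1)`, integrable on `(0,1)`. -/
def RadialWeight (v : ℝ → ℝ) : Prop :=
  Measurable v ∧ (∀ r ∈ Set.Ico (0:ℝ) 1, 0 < v r) ∧
    MeasureTheory.IntegrableOn v (Set.Ioo 0 1)

/-- Membership in the class `D̂`. -/
def DoublingD (v : ℝ → ℝ) : Prop :=
  ∃ C : ℝ, 1 ≤ C ∧ ∀ r ∈ Set.Ico (0:ℝ) 1, hatw v r ≤ C * hatw v ((1+r)/2)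

/-- Squared Dirichlet-type norm `‖f‖_{D_v}^2`. -/
def DvSq (v : ℝ → ℝ) (f : ℂ → ℂ) : ENNReal :=
  (‖f 0‖₊ : ENNReal)^2 +
    (ENNReal.ofReal Real.pi)⁻¹ *
      ∫⁻ z in Metric.ball (0:ℂ) 1, (‖deriv f z‖₊ : ENNReal)^2 * ENNReal.ofReal (v ‖z‖)

/-- The Muckenhoupt type quantity `M₁(v)`. -/
def M1v (v : ℝ → ℝ) : ENNReal :=
  ⨆ r ∈ Set.Ioo (0:ℝ) 1,
    (∫⁻ s in Set.Ioo r 1, ENNReal.ofReal (hatw v s / (1-s)^2)) ^ (1/2 : ℝ) *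
    (∫⁻ s in Set.Ioo (0:ℝ) r, ENNReal.ofReal (1 / hatw v s)) ^ (1/2 : ℝ)

/-- The Muckenhoupt type quantity `M₂(v)`. -/
def M2v (v : ℝ → ℝ) : ENNReal :=
  ⨆ r ∈ Set.Ioo (0:ℝ) 1,
    (∫⁻ s in Set.Ioo (0:ℝ) r, ENNReal.ofReal (hatw v s / (1-s)^4)) ^ (1/2 : ℝ) *
    (∫⁻ s in Set.Ioo r 1, ENNReal.ofReal ((1-s)^2 / hatw v s)) ^ (1/2 : ℝ)

/-- The moment `v_x = ∫_0^1 s^x v(s) ds`. -/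
def vx (v : ℝ → ℝ) (x : ℕ) : ℝ := ∫ s in (0:ℝ)..1, s^x * v s

/-- `M_∞(s,f)`, the maximum of `|f|` on the circle of radius `s`. -/
def Minf (f : ℂ → ℂ) (s : ℝ) : ℝ := sSup ((fun z => ‖f z‖) '' Metric.sphere (0:ℂ) s)

/-- `M₂(r,h)`. -/
def M2mean (h : ℂ → ℂ) (r : ℝ) : ℝ :=
  Real.sqrt ((2*Real.pi)⁻¹ * ∫ θ in (-Real.pi)..Real.pi, ‖h ((r:ℂ) * Complex.exp (θ * Complex.I))‖^2)

/-- The norm of `B(2,∞)` (with values in `[0,∞]`). -/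
def B2infE (g : ℂ → ℂ) : ENNReal :=
  (‖g 0‖₊ : ENNReal) +
    ⨆ r ∈ Set.Ioo (0:ℝ) 1, ENNReal.ofReal (M2mean (deriv g) r * Real.sqrt (1-r))

/-- The `p`-th power of the norm of `B(2,p)` (with values in `[0,∞]`). -/
def B2pE (p : ℝ) (g : ℂ → ℂ) : ENNReal :=
  ENNReal.ofReal (‖g 0‖ ^ p) +
    ∫⁻ r in Set.Ioo (0:ℝ) 1, ENNReal.ofReal (M2mean (deriv g) r ^ p * (1-r)^(p/2-1))

/-- The generalized Hilbert operator `H_g`. -/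
def Hg (g f : ℂ → ℂ) (z : ℂ) : ℂ := ∫ t in Set.Ioo (0:ℝ) 1, f t * deriv g (t * z)

/-- The Hilbert operator `H` acting on functions on `[0,1)`. -/
def Hop (φ : ℝ → ℂ) (z : ℂ) : ℂ := ∫ t in Set.Ioo (0:ℝ) 1, φ t / (1 - t * z)

/-- The sublinear Hilbert operator `H̃`. -/
def Htil (φ : ℝ → ℂ) (z : ℂ) : ℂ := ∫ t in Set.Ioo (0:ℝ) 1, (‖φ t‖ : ℂ) / (1 - t * z)

/-- Squared norm in `L²_{V̂₂}`. -/
def L2V2sq (v : ℝ → ℝ) (φ : ℝ → ℂ) : ENNReal :=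
  ∫⁻ t in Set.Ioo (0:ℝ) 1, (‖φ t‖₊ : ENNReal)^2 * ENNReal.ofReal (hatw v t / (1-t)^2)

/-- Taylor coefficient `ĝ(k)` of `g` at the origin. -/
def gcoef (g : ℂ → ℂ) (k : ℕ) : ℂ := iteratedDeriv k g 0 / (Nat.factorial k)

/-!
On a diameter of a circle, the `L²` norm of a holomorphic function is controlled by the one on the
circle (Fejér–Riesz). Integrating this over the radius against `v` shows that the radial restriction
of `f'` lies in `L²(v̂)`, with norm at most a constant times `‖f‖_{D_v}`. Hence by Cauchy–Schwarz
`∫_r^1 |f(t) - f(r)| dt ≤ ∫_r^1 (1 - s) |f'(s)| ds` is at most `(∫_r^1 (1 - s)² / v̂(s) ds)^{1/2}`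
times a constant, uniformly on bounded subsets of `D_v`, and this factor is small for `r` near `1`,
while on `[0, r]` the convergence is uniform.
-/

section

open Metric Topology ComplexConjugate
open scoped ENNReal

/-! ### The Fejér–Riesz inequality -/

lemma continuous_comp_circleMap {E : Type*} [TopologicalSpace E] {F : ℂ → E} {R s : ℝ}
    (hF : ContinuousOn F (ball 0 R)) (hs : |s| < R) : Continuous fun θ ↦ F (circleMap 0 s θ) :=
  hF.comp_continuous (continuous_circleMap 0 s) (by simpa using hs)

theorem integral_diameter_add_integral_semicircle_eq_zero {E : Type*} [NormedAddCommGroup E]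
    [NormedSpace ℂ E] [CompleteSpace E] {F : ℂ → E} {R s : ℝ}
    (hF : DifferentiableOn ℂ F (ball 0 R)) (hs : |s| < R) :
    (∫ t in (-s)..s, F t) +
      ∫ θ in (0 : ℝ)..π, deriv (circleMap 0 s) θ • F (circleMap 0 s θ) = 0 := by
  obtain ⟨P, hP⟩ := hF.isExactOn_ball
  have diameter_mem : ∀ t ∈ uIcc (-s) s, (t : ℂ) ∈ ball (0 : ℂ) R := fun t ht ↦ by
    have : |t| ≤ |s| := by grind [mem_uIcc]
    simpa using this.trans_lt hs
  have circle_mem (θ : ℝ) : circleMap 0 s θ ∈ ball (0 : ℂ) R := by simpa using hs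
  have diameter : ∫ t in (-s)..s, F t = P s - P (-s : ℝ) :=
    intervalIntegral.integral_eq_sub_of_hasDerivAt (f := fun t : ℝ ↦ P t)
      (fun t ht ↦ by
        simpa [Function.comp_def] using
          (hP t (diameter_mem t ht)).scomp t Complex.ofRealCLM.hasDerivAt)
      (hF.continuousOn.comp (by fun_prop) diameter_mem).intervalIntegrable
  have semicircle : ∫ θ in (0 : ℝ)..π, deriv (circleMap 0 s) θ • F (circleMap 0 s θ) =
      P (circleMap 0 s π) - P (circleMap 0 s 0) := by
    refine intervalIntegral.integral_eq_sub_of_hasDerivAt (f := fun θ ↦ P (circleMap 0 s θ))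
      (fun θ _ ↦ ?_) (Continuous.intervalIntegrable ?_ _ _)
    · exact (hP _ (circle_mem θ)).scomp θ (differentiable_circleMap 0 s θ).hasDerivAt
    · exact ((contDiff_circleMap 0 s (n := 1)).continuous_deriv le_rfl).smul
        (continuous_comp_circleMap hF.continuousOn hs)
  rw [diameter, semicircle]
  simp [circleMap_zero]

/-- The product of `g` with its Schwarz reflection `z ↦ conj (g (conj z))`: the holomorphic
extension of `|g|²` from the real axis, to which Cauchy's theorem applies. -/
def schwarzProduct (g : ℂ → ℂ) (z : ℂ) : ℂ := g z * conj (g (conj z))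

lemma schwarzProduct_ofReal (g : ℂ → ℂ) (t : ℝ) : schwarzProduct g t = (‖g t‖ ^ 2 : ℝ) := by
  simp [schwarzProduct, Complex.mul_conj']

lemma norm_schwarzProduct_circleMap (g : ℂ → ℂ) (s θ : ℝ) :
    ‖schwarzProduct g (circleMap 0 s θ)‖ = ‖g (circleMap 0 s θ)‖ * ‖g (circleMap 0 s (-θ))‖ := by
  have : conj (circleMap 0 s θ) = circleMap 0 s (-θ) := by simp [circleMap_zero, ← Complex.exp_conj]
  simp [schwarzProduct, this]

lemma differentiableOn_schwarzProduct {g : ℂ → ℂ} {R : ℝ} (hg : DifferentiableOn ℂ g (ball 0 R)) :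
    DifferentiableOn ℂ (schwarzProduct g) (ball 0 R) := fun z hz ↦ by
  have hg_at : ∀ w ∈ ball (0 : ℂ) R, DifferentiableAt ℂ g w := fun w hw ↦
    hg.differentiableAt (isOpen_ball.mem_nhds hw)
  have reflection : DifferentiableAt ℂ (conj ∘ g ∘ conj) z := by
    simpa using (hg_at (conj z) (by simpa using hz)).conj_conj
  exact ((hg_at z hz).mul reflection).differentiableWithinAt

lemma integral_add_comp_neg {E : Type*} [NormedAddCommGroup E] [NormedSpace ℝ E] {u : ℝ → E}
    {a : ℝ} (hu : IntervalIntegrable u volume (-a) a) :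
    ∫ θ in (0 : ℝ)..a, (u θ + u (-θ)) = ∫ θ in (-a)..a, u θ := by
  have zero_mem : (0 : ℝ) ∈ uIcc (-a) a := by
    rcases le_total 0 a with h | h <;> simp [h]
  have left : IntervalIntegrable u volume (-a) 0 :=
    hu.mono_set (uIcc_subset_uIcc_left zero_mem)
  have right : IntervalIntegrable u volume 0 a :=
    hu.mono_set (uIcc_subset_uIcc_right zero_mem)
  have right_comp_neg : IntervalIntegrable (fun θ ↦ u (-θ)) volume 0 a := by
    simpa using ((IntervalIntegrable.iff_comp_neg).1 left).symm
  rw [intervalIntegral.integral_add right right_comp_neg,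
    intervalIntegral.integral_comp_neg, neg_zero, add_comm,
    intervalIntegral.integral_add_adjacent_intervals left right]

theorem integral_diameter_norm_sq_le_circle {g : ℂ → ℂ} {R s : ℝ}
    (hg : DifferentiableOn ℂ g (ball 0 R)) (hs : 0 ≤ s) (hsR : s < R) :
    ∫ t in (-s)..s, ‖g t‖ ^ 2 ≤ s / 2 * ∫ θ in (-π)..π, ‖g (circleMap 0 s θ)‖ ^ 2 := by
  set u : ℝ → ℝ := fun θ ↦ ‖g (circleMap 0 s θ)‖ ^ 2
  have hs_abs : |s| < R := (abs_of_nonneg hs).trans_lt hsR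
  have hu : Continuous u := (continuous_comp_circleMap hg.continuousOn hs_abs).norm.pow 2
  have diameter : ∫ t in (-s)..s, schwarzProduct g t = (∫ t in (-s)..s, ‖g t‖ ^ 2 : ℝ) := by
    simp only [schwarzProduct_ofReal, intervalIntegral.integral_ofReal]
  have cauchy := eq_neg_of_add_eq_zero_left <|
    integral_diameter_add_integral_semicircle_eq_zero (differentiableOn_schwarzProduct hg) hs_abs
  have semicircle_le (θ : ℝ) :
      ‖deriv (circleMap 0 s) θ • schwarzProduct g (circleMap 0 s θ)‖ ≤
        s / 2 * (u θ + u (-θ)) := by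
    have amgm := two_mul_le_add_sq ‖g (circleMap 0 s θ)‖ ‖g (circleMap 0 s (-θ))‖
    rw [norm_smul, norm_schwarzProduct_circleMap, deriv_circleMap, norm_mul, Complex.norm_I,
      norm_circleMap_zero, abs_of_nonneg hs, mul_one]
    linarith [mul_le_mul_of_nonneg_left amgm (by positivity : 0 ≤ s / 2)]
  calc ∫ t in (-s)..s, ‖g t‖ ^ 2
      ≤ ‖∫ t in (-s)..s, schwarzProduct g t‖ := by
        rw [diameter, Complex.norm_real]
        exact le_abs_self _
    _ = ‖∫ θ in (0 : ℝ)..π,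
          deriv (circleMap 0 s) θ • schwarzProduct g (circleMap 0 s θ)‖ := by rw [cauchy, norm_neg]
    _ ≤ ∫ θ in (0 : ℝ)..π, s / 2 * (u θ + u (-θ)) :=
        intervalIntegral.norm_integral_le_of_norm_le pi_pos.le
          (.of_forall fun θ _ ↦ semicircle_le θ)
          (Continuous.intervalIntegrable (by fun_prop) _ _)
    _ = s / 2 * ∫ θ in (-π)..π, u θ := by
        rw [intervalIntegral.integral_const_mul,
          integral_add_comp_neg (hu.intervalIntegrable _ _)]

lemma ofReal_intervalIntegral_norm_sq {E : Type*} [NormedAddCommGroup E] {h : ℝ → E} {a b : ℝ}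
    (hab : a ≤ b) (hh : ContinuousOn h (Icc a b)) :
    ENNReal.ofReal (∫ t in a..b, ‖h t‖ ^ 2) = ∫⁻ t in Ioo a b, ‖h t‖ₑ ^ 2 := by
  have integrable : IntegrableOn (fun t ↦ ‖h t‖ ^ 2) (Ioo a b) :=
    (hh.norm.pow 2).integrableOn_Icc.mono_set Ioo_subset_Icc_self
  rw [intervalIntegral.integral_of_le hab, integral_Ioc_eq_integral_Ioo,
    ofReal_integral_eq_lintegral_ofReal integrable (.of_forall fun _ ↦ by positivity)]
  simp only [ENNReal.ofReal_pow (norm_nonneg _), ofReal_norm]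

theorem lintegral_diameter_enorm_sq_le_circle {g : ℂ → ℂ} {R s : ℝ}
    (hg : DifferentiableOn ℂ g (ball 0 R)) (hs : 0 ≤ s) (hsR : s < R) :
    ∫⁻ t in Ioo (-s) s, ‖g t‖ₑ ^ 2 ≤
      ENNReal.ofReal (s / 2) * ∫⁻ θ in Ioo (-π) π, ‖g (circleMap 0 s θ)‖ₑ ^ 2 := by
  have diameter : ContinuousOn (fun t : ℝ ↦ g t) (Icc (-s) s) :=
    hg.continuousOn.comp (by fun_prop) fun t ht ↦ by
      simpa using (abs_le.2 ht).trans_lt hsR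
  have circle : Continuous fun θ ↦ g (circleMap 0 s θ) :=
    continuous_comp_circleMap hg.continuousOn ((abs_of_nonneg hs).trans_lt hsR)
  rw [← ofReal_intervalIntegral_norm_sq (by linarith) diameter,
    ← ofReal_intervalIntegral_norm_sq (by linarith [pi_pos]) circle.continuousOn,
    ← ENNReal.ofReal_mul (by positivity)]
  exact ENNReal.ofReal_le_ofReal (integral_diameter_norm_sq_le_circle hg hs hsR)

/-! ### Integration over discs and triangles -/

theorem lintegral_ball_zero_eq_polar {F : ℂ → ℝ≥0∞} (hF : Measurable F) (R : ℝ) :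
    ∫⁻ z in ball 0 R, F z =
      ∫⁻ s in Ioo 0 R, ENNReal.ofReal s * ∫⁻ θ in Ioo (-π) π, F (circleMap 0 s θ) := by
  have hF_circle (s : ℝ) : Measurable fun θ ↦ F (circleMap 0 s θ) :=
    hF.comp (continuous_circleMap 0 s).measurable
  have hmeas : Measurable fun p : ℝ × ℝ ↦
      ENNReal.ofReal p.1 * (ball 0 R).indicator F (Complex.polarCoord.symm p) := by
    have : Measurable fun p ↦ Complex.polarCoord.symm p := by
      simp only [Complex.polarCoord_symm_apply]
      fun_prop
    exact (by fun_prop : Measurable fun p : ℝ × ℝ ↦ ENNReal.ofReal p.1).mul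
      ((hF.indicator measurableSet_ball).comp this)
  rw [← lintegral_indicator measurableSet_ball, ← Complex.lintegral_comp_polarCoord_symm]
  simp only [smul_eq_mul, polarCoord_target]
  rw [Measure.volume_eq_prod, setLIntegral_prod _ hmeas.aemeasurable]
  have inner : ∀ s ∈ Ioi (0 : ℝ), ∫⁻ θ in Ioo (-π) π, ENNReal.ofReal s *
      (ball 0 R).indicator F (Complex.polarCoord.symm (s, θ)) =
      (Iio R).indicator
        (fun s ↦ ENNReal.ofReal s * ∫⁻ θ in Ioo (-π) π, F (circleMap 0 s θ)) s := fun s hs ↦ by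
    have polar (θ : ℝ) : Complex.polarCoord.symm (s, θ) = circleMap 0 s θ := by
      simp [circleMap_zero, Complex.exp_mul_I]
    by_cases h : s < R
    · simp [polar, h, abs_of_pos (mem_Ioi.1 hs), lintegral_const_mul _ (hF_circle s)]
    · simp [polar, h, abs_of_pos (mem_Ioi.1 hs)]
  rw [setLIntegral_congr_fun measurableSet_Ioi inner, setLIntegral_indicator measurableSet_Iio,
    Iio_inter_Ioi]

theorem lintegral_mul_lintegral_Ioi {α : Type*} [LinearOrder α] [TopologicalSpace α]
    [OrderClosedTopology α] [SecondCountableTopology α] [MeasurableSpace α] [OpensMeasurableSpace α]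
    {μ ν : Measure α} [SFinite μ] [SFinite ν] {φ ψ : α → ℝ≥0∞} (hφ : Measurable φ)
    (hψ : Measurable ψ) :
    ∫⁻ t, φ t * ∫⁻ s in Ioi t, ψ s ∂ν ∂μ = ∫⁻ s, (∫⁻ t in Iio s, φ t ∂μ) * ψ s ∂ν := by
  set K : α × α → ℝ≥0∞ := {p | p.1 < p.2}.indicator fun p ↦ φ p.1 * ψ p.2 with hK
  have hK_meas : Measurable K :=
    Measurable.indicator (by fun_prop) (measurableSet_lt measurable_fst measurable_snd)
  have left (t : α) : φ t * ∫⁻ s in Ioi t, ψ s ∂ν = ∫⁻ s, K (t, s) ∂ν := by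
    rw [← lintegral_const_mul _ hψ, ← lintegral_indicator measurableSet_Ioi]
    simp [hK, indicator]
  have right (s : α) : (∫⁻ t in Iio s, φ t ∂μ) * ψ s = ∫⁻ t, K (t, s) ∂μ := by
    rw [← lintegral_mul_const _ hφ, ← lintegral_indicator measurableSet_Iio]
    simp [hK, indicator]
  simp only [left, right]
  exact lintegral_lintegral_swap hK_meas.aemeasurable

theorem setLIntegral_Ioo_mul_lintegral_Ioo {φ ψ : ℝ → ℝ≥0∞} (hφ : Measurable φ)
    (hψ : Measurable ψ) (a b : ℝ) :
    ∫⁻ t in Ioo a b, φ t * ∫⁻ s in Ioo t b, ψ s =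
      ∫⁻ s in Ioo a b, (∫⁻ t in Ioo a s, φ t) * ψ s := by
  have h := lintegral_mul_lintegral_Ioi (μ := volume.restrict (Ioo a b))
    (ν := volume.restrict (Ioo a b)) hφ hψ
  simp only [Measure.restrict_restrict, measurableSet_Ioi, measurableSet_Iio] at h
  convert h using 1
  · refine setLIntegral_congr_fun measurableSet_Ioo fun t ht ↦ ?_
    simp only [Ioi_inter_Ioo, sup_eq_left.2 ht.1.le]
  · refine setLIntegral_congr_fun measurableSet_Ioo fun s hs ↦ ?_
    simp only [Iio_inter_Ioo, inf_eq_left.2 hs.2.le]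

lemma lintegral_lintegral_Ioo {φ : ℝ → ℝ≥0∞} (hφ : Measurable φ) (a b : ℝ) :
    ∫⁻ t in Ioo a b, ∫⁻ s in Ioo a t, φ s = ∫⁻ s in Ioo a b, ENNReal.ofReal (b - s) * φ s := by
  simpa [mul_comm] using
    (setLIntegral_Ioo_mul_lintegral_Ioo hφ (measurable_const (a := (1 : ℝ≥0∞))) a b).symm

/-! ### Weighted estimates on a radius -/

theorem lintegral_radius_mul_lintegral_Ioo_le {v : ℝ → ℝ≥0∞} (hv : Measurable v) {g : ℂ → ℂ}
    (hg_meas : Measurable g) {R : ℝ} (hg : DifferentiableOn ℂ g (ball 0 R)) :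
    ∫⁻ t in Ioo 0 R, ‖g (t : ℝ)‖ₑ ^ 2 * ∫⁻ s in Ioo t R, v s ≤
      ∫⁻ z in ball 0 R, ‖g z‖ₑ ^ 2 * v ‖z‖ := by
  have hg_real : Measurable fun t : ℝ ↦ ‖g t‖ₑ ^ 2 :=
    (hg_meas.comp Complex.measurable_ofReal).enorm.pow_const 2
  rw [setLIntegral_Ioo_mul_lintegral_Ioo hg_real hv,
    lintegral_ball_zero_eq_polar (F := fun z ↦ ‖g z‖ₑ ^ 2 * v ‖z‖) (by fun_prop)]
  refine setLIntegral_mono' measurableSet_Ioo fun s hs ↦ ?_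
  have circle : Measurable fun θ ↦ ‖g (circleMap 0 s θ)‖ₑ ^ 2 :=
    (hg_meas.comp (continuous_circleMap 0 s).measurable).enorm.pow_const 2
  calc (∫⁻ t in Ioo 0 s, ‖g (t : ℝ)‖ₑ ^ 2) * v s
      ≤ (∫⁻ t in Ioo (-s) s, ‖g (t : ℝ)‖ₑ ^ 2) * v s := by
        gcongr
        linarith [hs.1]
    _ ≤ ENNReal.ofReal (s / 2) * (∫⁻ θ in Ioo (-π) π, ‖g (circleMap 0 s θ)‖ₑ ^ 2) * v s := by
        gcongr
        exact lintegral_diameter_enorm_sq_le_circle hg hs.1.le hs.2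
    _ ≤ ENNReal.ofReal s * (∫⁻ θ in Ioo (-π) π, ‖g (circleMap 0 s θ)‖ₑ ^ 2) * v s := by
        gcongr
        linarith [hs.1]
    _ = ENNReal.ofReal s *
          ∫⁻ θ in Ioo (-π) π, ‖g (circleMap 0 s θ)‖ₑ ^ 2 * v ‖circleMap 0 s θ‖ := by
        simp only [norm_circleMap_zero, abs_of_pos hs.1, lintegral_mul_const _ circle, mul_assoc]

theorem lintegral_mul_le_weighted {α : Type*} [MeasurableSpace α] {μ : Measure α}
    {φ ψ w : α → ℝ≥0∞} (hφ : AEMeasurable φ μ) (hψ : AEMeasurable ψ μ) (hw : AEMeasurable w μ)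
    (hw_zero : ∀ᵐ x ∂μ, w x ≠ 0) (hw_top : ∀ᵐ x ∂μ, w x ≠ ∞) :
    ∫⁻ x, φ x * ψ x ∂μ ≤
      (∫⁻ x, φ x ^ 2 / w x ∂μ) ^ (1 / 2 : ℝ) * (∫⁻ x, ψ x ^ 2 * w x ∂μ) ^ (1 / 2 : ℝ) := by
  have sqrt_sq (x : ℝ≥0∞) : (x ^ 2) ^ (1 / 2 : ℝ) = x := by
    rw [← ENNReal.rpow_natCast_mul]; norm_num
  have split : ∀ᵐ x ∂μ,
      φ x * ψ x = (φ x ^ 2 / w x) ^ (1 / 2 : ℝ) * (ψ x ^ 2 * w x) ^ (1 / 2 : ℝ) := by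
    filter_upwards [hw_zero, hw_top] with x h0 htop
    rw [← ENNReal.mul_rpow_of_nonneg _ _ (by norm_num), mul_comm (ψ x ^ 2), ← mul_assoc,
      ENNReal.div_mul_cancel h0 htop, ← mul_pow, sqrt_sq]
  rw [lintegral_congr_ae split]
  exact ENNReal.lintegral_mul_norm_pow_le (by fun_prop) (by fun_prop) (by norm_num) (by norm_num)
    (by norm_num)

lemma tendsto_lintegral_Ioo_nhdsLT {φ : ℝ → ℝ≥0∞} {a b : ℝ} (hab : a < b)
    (hφ : ∫⁻ s in Ioo a b, φ s ≠ ∞) :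
    Tendsto (fun r ↦ ∫⁻ s in Ioo r b, φ s) (𝓝[<] b) (𝓝 0) := by
  have hvol : Tendsto (fun r ↦ volume.restrict (Ioo a b) (Ioo r b)) (𝓝[<] b) (𝓝 0) := by
    have : Tendsto (fun r ↦ ENNReal.ofReal (b - r)) (𝓝[<] b) (𝓝 0) := by
      have : Continuous fun r ↦ ENNReal.ofReal (b - r) :=
        ENNReal.continuous_ofReal.comp (continuous_const.sub continuous_id)
      simpa using this.continuousWithinAt.tendsto (s := Iio b) (x := b)
    refine tendsto_of_tendsto_of_tendsto_of_le_of_le tendsto_const_nhds this (fun _ ↦ zero_le)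
      fun r ↦ (Measure.restrict_apply_le _ _).trans_eq Real.volume_Ioo
  refine (tendsto_setLIntegral_zero hφ hvol).congr' ?_
  filter_upwards [Ioo_mem_nhdsLT hab] with r hr
  rw [Measure.restrict_restrict measurableSet_Ioo,
    inter_eq_left.2 (Ioo_subset_Ioo_left hr.1.le)]

lemma enorm_le_add_lintegral_enorm_deriv {f : ℂ → ℂ} {R r t : ℝ}
    (hf : DifferentiableOn ℂ f (ball 0 R)) (hr : -R < r) (hrt : r ≤ t) (ht : t < R) :
    ‖f t‖ₑ ≤ ‖f r‖ₑ + ∫⁻ s in Ioo r t, ‖deriv f (s : ℝ)‖ₑ := by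
  have mem : ∀ x ∈ uIcc r t, (x : ℂ) ∈ ball (0 : ℂ) R := fun x hx ↦ by
    rw [uIcc_of_le hrt] at hx
    simpa using abs_lt.2 ⟨hr.trans_le hx.1, hx.2.trans_lt ht⟩
  have ftc : ∫ x in r..t, deriv f (x : ℝ) = f t - f r :=
    intervalIntegral.integral_eq_sub_of_hasDerivAt (f := fun x : ℝ ↦ f x)
      (fun x hx ↦ (hf.differentiableAt (isOpen_ball.mem_nhds (mem x hx))).hasDerivAt.comp_ofReal)
      ((hf.deriv isOpen_ball).continuousOn.comp (by fun_prop) mem).intervalIntegrable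
  rw [intervalIntegral.integral_of_le hrt, integral_Ioc_eq_integral_Ioo, eq_sub_iff_add_eq'] at ftc
  rw [← ftc]
  exact (enorm_add_le _ _).trans (by gcongr; exact enorm_integral_le_lintegral_enorm _)

/-! ### The space `D_v` -/

variable {v : ℝ → ℝ}

lemma RadialWeight.hatw_pos (hv : RadialWeight v) {t : ℝ} (ht : t ∈ Ico (0 : ℝ) 1) :
    0 < hatw v t :=
  intervalIntegral.intervalIntegral_pos_of_pos_on
    ((intervalIntegrable_iff_integrableOn_Ioo_of_le ht.2.le).2
      (hv.2.2.mono_set (Ioo_subset_Ioo_left ht.1)))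
    (fun s hs ↦ hv.2.1 s ⟨ht.1.trans hs.1.le, hs.2⟩) ht.2

lemma RadialWeight.lintegral_Ioo_eq_ofReal_hatw (hv : RadialWeight v) {t : ℝ}
    (ht : t ∈ Ico (0 : ℝ) 1) :
    ∫⁻ s in Ioo t 1, ENNReal.ofReal (v s) = ENNReal.ofReal (hatw v t) := by
  rw [hatw, intervalIntegral.integral_of_le ht.2.le, integral_Ioc_eq_integral_Ioo,
    ofReal_integral_eq_lintegral_ofReal (hv.2.2.mono_set (Ioo_subset_Ioo_left ht.1))]
  exact (ae_restrict_mem measurableSet_Ioo).mono fun s hs ↦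
    (hv.2.1 s ⟨ht.1.trans hs.1.le, hs.2⟩).le

lemma lintegral_enorm_deriv_sq_le_pi_mul_DvSq (v : ℝ → ℝ) (f : ℂ → ℂ) :
    ∫⁻ z in ball 0 1, ‖deriv f z‖ₑ ^ 2 * ENNReal.ofReal (v ‖z‖) ≤ ENNReal.ofReal π * DvSq v f :=
  (ENNReal.inv_mul_le_iff (by simp [pi_pos]) ENNReal.ofReal_ne_top).1 le_add_self

theorem RadialWeight.lintegral_lintegral_Ioo_le (hv : RadialWeight v) {g : ℂ → ℂ}
    (hg_meas : Measurable g) (hg : DifferentiableOn ℂ g (ball 0 1)) {r : ℝ} (hr : 0 ≤ r) :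
    ∫⁻ t in Ioo r 1, ∫⁻ s in Ioo r t, ‖g (s : ℝ)‖ₑ ≤
      (∫⁻ s in Ioo r 1, ENNReal.ofReal ((1 - s) ^ 2 / hatw v s)) ^ (1 / 2 : ℝ) *
        (∫⁻ z in ball 0 1, ‖g z‖ₑ ^ 2 * ENNReal.ofReal (v ‖z‖)) ^ (1 / 2 : ℝ) := by
  set w : ℝ → ℝ≥0∞ := fun t ↦ ∫⁻ s in Ioo t 1, ENNReal.ofReal (v s)
  have hw_anti : Antitone w := fun _ _ hst ↦ lintegral_mono_set (Ioo_subset_Ioo_left hst)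
  have hw_hatw : ∀ s ∈ Ioo r 1, 0 < hatw v s ∧ w s = ENNReal.ofReal (hatw v s) := fun s hs ↦
    have hs' : s ∈ Ico (0 : ℝ) 1 := ⟨hr.trans hs.1.le, hs.2⟩
    ⟨hv.hatw_pos hs', hv.lintegral_Ioo_eq_ofReal_hatw hs'⟩
  have hg_real : Measurable fun t : ℝ ↦ ‖g t‖ₑ :=
    (hg_meas.comp Complex.measurable_ofReal).enorm
  calc ∫⁻ t in Ioo r 1, ∫⁻ s in Ioo r t, ‖g (s : ℝ)‖ₑ
      = ∫⁻ s in Ioo r 1, ENNReal.ofReal (1 - s) * ‖g (s : ℝ)‖ₑ :=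
        lintegral_lintegral_Ioo hg_real r 1
    _ ≤ (∫⁻ s in Ioo r 1, ENNReal.ofReal (1 - s) ^ 2 / w s) ^ (1 / 2 : ℝ) *
          (∫⁻ s in Ioo r 1, ‖g (s : ℝ)‖ₑ ^ 2 * w s) ^ (1 / 2 : ℝ) :=
        lintegral_mul_le_weighted (by fun_prop) hg_real.aemeasurable hw_anti.measurable.aemeasurable
          ((ae_restrict_mem measurableSet_Ioo).mono fun s hs ↦ by simp [hw_hatw s hs])
          ((ae_restrict_mem measurableSet_Ioo).mono fun s hs ↦ by simp [hw_hatw s hs])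
    _ ≤ _ := by
        gcongr ?_ ^ _ * ?_ ^ _
        · refine (setLIntegral_congr_fun measurableSet_Ioo fun s hs ↦ ?_).le
          obtain ⟨hatw_pos, hws⟩ := hw_hatw s hs
          simp only [hws, ENNReal.ofReal_div_of_pos hatw_pos,
            ENNReal.ofReal_pow (sub_nonneg.2 hs.2.le)]
        · exact (lintegral_mono_set (Ioo_subset_Ioo_left hr)).trans
            (lintegral_radius_mul_lintegral_Ioo_le hv.1.ennreal_ofReal hg_meas hg)

theorem RadialWeight.lintegral_radius_le (hv : RadialWeight v) {f : ℂ → ℂ}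
    (hf : DifferentiableOn ℂ f (ball 0 1)) {r : ℝ} (hr : r ∈ Ico (0 : ℝ) 1) {δ : ℝ≥0∞}
    (hδ : ∀ t ∈ Icc 0 r, ‖f (t : ℝ)‖ₑ ≤ δ) :
    ∫⁻ t in Ioo (0 : ℝ) 1, ‖f t‖ₑ ≤
      δ + (∫⁻ s in Ioo r 1, ENNReal.ofReal ((1 - s) ^ 2 / hatw v s)) ^ (1 / 2 : ℝ) *
        (ENNReal.ofReal π * DvSq v f) ^ (1 / 2 : ℝ) := by
  set D : ℝ → ℝ≥0∞ := fun t ↦ ∫⁻ s in Ioo r t, ‖deriv f (s : ℝ)‖ₑ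
  have pointwise : ∀ t ∈ Ioo (0 : ℝ) 1, ‖f t‖ₑ ≤ δ + (Ioo r 1).indicator D t := fun t ht ↦ by
    rcases le_or_gt t r with htr | hrt
    · exact (hδ t ⟨ht.1.le, htr⟩).trans le_self_add
    · rw [indicator_of_mem (show t ∈ Ioo r 1 from ⟨hrt, ht.2⟩)]
      exact (enorm_le_add_lintegral_enorm_deriv hf (by linarith [hr.1]) hrt.le ht.2).trans
        (by gcongr; exact hδ r ⟨hr.1, le_rfl⟩)
  calc ∫⁻ t in Ioo (0 : ℝ) 1, ‖f t‖ₑ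
      ≤ ∫⁻ t in Ioo (0 : ℝ) 1, (δ + (Ioo r 1).indicator D t) :=
        setLIntegral_mono' measurableSet_Ioo pointwise
    _ = δ + ∫⁻ t in Ioo r 1 ∩ Ioo 0 1, D t := by
        rw [lintegral_add_left measurable_const, setLIntegral_indicator measurableSet_Ioo]
        simp
    _ ≤ δ + ∫⁻ t in Ioo r 1, D t := by
        gcongr
        exact inter_subset_left
    _ ≤ _ := by
        gcongr
        refine (hv.lintegral_lintegral_Ioo_le (measurable_deriv f) (hf.deriv isOpen_ball)
          hr.1).trans ?_
        gcongr
        exact lintegral_enorm_deriv_sq_le_pi_mul_DvSq v f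

theorem statement18_general (hv : RadialWeight v)
    (hv_int : ∫⁻ s in Ioo (0 : ℝ) 1, ENNReal.ofReal ((1 - s) ^ 2 / hatw v s) < ∞)
    {ι : Type*} {l : Filter ι} {f : ι → ℂ → ℂ} (hf : ∀ j, DifferentiableOn ℂ (f j) (ball 0 1))
    {K : ℝ} (hK : ∀ j, DvSq v (f j) ≤ ENNReal.ofReal K)
    (hconv : TendstoLocallyUniformlyOn f (fun _ ↦ 0) l (ball 0 1)) :
    Tendsto (fun j ↦ ∫⁻ t in Ioo (0 : ℝ) 1, ‖f j t‖ₑ) l (𝓝 0) := by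
  set B : ℝ≥0∞ := (ENNReal.ofReal π * ENNReal.ofReal K) ^ (1 / 2 : ℝ)
  have hB : B ≠ ∞ := by finiteness
  have energy_le (j : ι) : (ENNReal.ofReal π * DvSq v (f j)) ^ (1 / 2 : ℝ) ≤ B :=
    ENNReal.rpow_le_rpow (by gcongr; exact hK j) (by norm_num)
  have tail_tendsto : Tendsto (fun r ↦
      (∫⁻ s in Ioo r 1, ENNReal.ofReal ((1 - s) ^ 2 / hatw v s)) ^ (1 / 2 : ℝ) * B)
      (𝓝[<] 1) (𝓝 0) := by
    simpa using ENNReal.Tendsto.mul_const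
      ((tendsto_lintegral_Ioo_nhdsLT zero_lt_one hv_int.ne).ennrpow_const (1 / 2)) (.inr hB)
  refine ENNReal.tendsto_nhds_zero.2 fun ε hε ↦ ?_
  have hε_half : 0 < ε / 2 := ENNReal.half_pos hε.ne'
  obtain ⟨r, tail_le, hr⟩ := ((ENNReal.tendsto_nhds_zero.1 tail_tendsto _ hε_half).and
    (Ioo_mem_nhdsLT zero_lt_one)).exists
  have small_of_le : ∀ᶠ j in l, ∀ z ∈ closedBall (0 : ℂ) r, ‖f j z‖ₑ < ε / 2 := by
    simpa only [edist_comm (0 : ℂ), edist_zero_right] using EMetric.tendstoUniformlyOn_iff.1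
      ((tendstoLocallyUniformlyOn_iff_forall_isCompact isOpen_ball).1 hconv _
        (closedBall_subset_ball hr.2) (isCompact_closedBall _ _)) _ hε_half
  filter_upwards [small_of_le] with j hj
  calc ∫⁻ t in Ioo (0 : ℝ) 1, ‖f j t‖ₑ
      ≤ ε / 2 + (∫⁻ s in Ioo r 1, ENNReal.ofReal ((1 - s) ^ 2 / hatw v s)) ^ (1 / 2 : ℝ) *
          (ENNReal.ofReal π * DvSq v (f j)) ^ (1 / 2 : ℝ) :=
        hv.lintegral_radius_le (hf j) ⟨hr.1.le, hr.2⟩ fun t ht ↦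
          (hj t (by simpa [abs_of_nonneg ht.1] using ht.2)).le
    _ ≤ ε / 2 + ε / 2 := by
        gcongr
        exact le_trans (by gcongr; exact energy_le j) tail_le
    _ = ε := ENNReal.add_halves ε

end

/-- Lemma 3.4(i): for a bounded sequence in `D_v` converging to `0`
uniformly on compact subsets of the disc, `∫_0^1 |f_j(t)| dt → 0`. -/
theorem statement18 (v : ℝ → ℝ) (hv : RadialWeight v)
    (hvg2 : ∫⁻ s in Set.Ioo (0:ℝ) 1, ENNReal.ofReal ((1-s)^2 / hatw v s) < ⊤)
    (hM1 : M1v v < ⊤)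
    (f : ℕ → ℂ → ℂ) (hf : ∀ j, DifferentiableOn ℂ (f j) (Metric.ball 0 1))
    (K : ℝ) (hK : ∀ j, DvSq v (f j) ≤ ENNReal.ofReal K)
    (hconv : ∀ S : Set ℂ, S ⊆ Metric.ball 0 1 → IsCompact S →
      TendstoUniformlyOn (fun j z => f j z) (fun _ => (0:ℂ)) Filter.atTop S) :
    Filter.Tendsto (fun j => ∫⁻ t in Set.Ioo (0:ℝ) 1, (‖f j (t:ℂ)‖₊ : ENNReal))
      Filter.atTop (nhds 0) :=
  statement18_general hv hvg2 hf hK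
    ((tendstoLocallyUniformlyOn_iff_forall_isCompact Metric.isOpen_ball).2 hconv)

end
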